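/- Johnstone's dcpo 𝕊 is dominated: for every closed irreducible subset A of 𝕊, the collection ∇A = {A' ∈ 𝕊̂ : A' ◁ A} is Scott-closed in the order sobrification 𝕊̂. -/

import Mathlib

/-
A dcpo is dominated as soon as each closed irreducible set that is bounded above has a greatest
element. Indeed, the members of a directed `D ⊆ ∇A` are then principal, and their greatest elements
form a directed subset of `A`; its supremum `x` lies in `A`, and `↓x` bounds `D`, so `sup D ◁ A`.

In Johnstone's dcpo a closed set bounded above either contains its bound or has bounded height.
In the second case it has no infinite ascending chain, so all its lower subsets are Scott-closed;
irreducibility then makes it directed, and the ascending chain condition gives a greatest element.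
-/

namespace HoZhao

variable {α : Type*}

/-- A set is Scott-closed if it is a lower set and contains the supremum of each of its
nonempty directed subsets. -/
def ScottClosed [Preorder α] (S : Set α) : Prop :=
  IsLowerSet S ∧ ∀ d : Set α, d ⊆ S → d.Nonempty → DirectedOn (· ≤ ·) d →
    ∀ a : α, IsLUB d a → a ∈ S

/-- A nonempty set is irreducible if whenever it is covered by two Scott-closed sets it is
contained in one of them. -/
def ScottIrred [Preorder α] (A : Set α) : Prop :=
  A.Nonempty ∧ ∀ B C : Set α, ScottClosed B → ScottClosed C → A ⊆ B ∪ C → A ⊆ B ∨ A ⊆ C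

/-- A dcpo: every nonempty directed subset has a supremum. -/
def IsDcpo (α : Type*) [Preorder α] : Prop :=
  ∀ d : Set α, d.Nonempty → DirectedOn (· ≤ ·) d → ∃ a : α, IsLUB d a

/-- The order sobrification: the poset of Scott-closed irreducible subsets, ordered by
inclusion. -/
abbrev OrderSob (α : Type*) [Preorder α] :=
  {A : Set α // ScottClosed A ∧ ScottIrred A}

/-- x' ≺ x : for every closed irreducible set A with x ≤ sup A, one has x' ∈ A. -/
def Prec [Preorder α] (x' x : α) : Prop :=
  ∀ A : Set α, ScottClosed A → ScottIrred A → ∀ a : α, IsLUB A a → x ≤ a → x' ∈ A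

/-- A' ◁ A : A' is contained in ↓x for some x ∈ A. -/
def Tri [Preorder α] (A' A : OrderSob α) : Prop :=
  ∃ x ∈ (A : Set α), (A' : Set α) ⊆ {y : α | y ≤ x}

/-- ∇A = the collection of all A' ◁ A. -/
def Nabla [Preorder α] (A : OrderSob α) : Set (OrderSob α) := {A' | Tri A' A}

/-- A dcpo is dominated if ∇A is Scott-closed in the order sobrification, for every A. -/
def Dominated (α : Type*) [Preorder α] : Prop :=
  ∀ A : OrderSob α, ScottClosed (Nabla A)

/-- The underlying set of Johnstone's dcpo: ℕ × ℕ∞. -/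
def JS : Type := ℕ × ℕ∞

/-- Johnstone's order: (m,n) ≤ (m',n') iff (m = m' and n ≤ n'), or
(n' = ∞, n is finite, and n ≤ m'). -/
instance : PartialOrder JS where
  le p q := (p.1 = q.1 ∧ p.2 ≤ q.2) ∨ (q.2 = ⊤ ∧ p.2 ≠ ⊤ ∧ p.2 ≤ (q.1 : ℕ∞))
  le_refl p := Or.inl ⟨rfl, le_rfl⟩
  le_trans p q r hpq hqr := by
    rcases hpq with ⟨h1, h2⟩ | ⟨h1, h2, h3⟩ <;>
      rcases hqr with ⟨g1, g2⟩ | ⟨g1, g2, g3⟩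
    · exact Or.inl ⟨h1.trans g1, h2.trans g2⟩
    · refine Or.inr ⟨g1, ?_, h2.trans g3⟩
      intro h
      rw [h] at h2
      exact g2 (top_le_iff.mp h2)
    · rw [h1] at g2
      refine Or.inr ⟨top_le_iff.mp g2, h2, ?_⟩
      rw [← g1]
      exact h3
    · exact absurd h1 g2
  le_antisymm p q hpq hqp := by
    rcases hpq with ⟨h1, h2⟩ | ⟨h1, h2, h3⟩ <;>
      rcases hqp with ⟨g1, g2⟩ | ⟨g1, g2, g3⟩
    · exact Prod.ext h1 (le_antisymm h2 g2)
    · rw [g1] at h2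
      exact absurd (top_le_iff.mp h2) g2
    · rw [h1] at g2
      exact absurd (top_le_iff.mp g2) h2
    · exact absurd g1 h2

theorem scottClosed_of_wellFoundedOn_gt [Preorder α] {S : Set α} (hS : IsLowerSet S)
    (hwf : S.WellFoundedOn (· > ·)) : ScottClosed S := by
  refine ⟨hS, fun d hdS hne hd a ha => ?_⟩
  obtain ⟨p, hp⟩ := (hwf.subset hdS).exists_maximal hne
  have hp_greatest : IsGreatest d p := hd.maximal_iff_isGreatest.1 hp
  exact hS (ha.2 hp_greatest.2) (hdS hp.1)

theorem ScottIrred.directedOn_of_wellFoundedOn_gt [Preorder α] {S : Set α} (hirr : ScottIrred S)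
    (hS : IsLowerSet S) (hwf : S.WellFoundedOn (· > ·)) : DirectedOn (· ≤ ·) S := by
  have hclosed (x : α) : ScottClosed {z ∈ S | ¬ x ≤ z} :=
    scottClosed_of_wellFoundedOn_gt
      (fun _ _ hle hz => ⟨hS hle hz.1, fun hx => hz.2 (hx.trans hle)⟩)
      (hwf.subset (Set.sep_subset _ _))
  intro x hx y hy
  by_contra! hno
  have hcover : S ⊆ {z ∈ S | ¬ x ≤ z} ∪ {z ∈ S | ¬ y ≤ z} := fun z hz => by
    by_cases hxz : x ≤ z
    · exact .inr ⟨hz, hno z hz hxz⟩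
    · exact .inl ⟨hz, hxz⟩
  rcases hirr.2 _ _ (hclosed x) (hclosed y) hcover with h | h
  · exact (h hx).2 le_rfl
  · exact (h hy).2 le_rfl

theorem ScottIrred.exists_isGreatest_of_wellFoundedOn_gt [Preorder α] {S : Set α}
    (hirr : ScottIrred S) (hS : IsLowerSet S) (hwf : S.WellFoundedOn (· > ·)) :
    ∃ p, IsGreatest S p := by
  obtain ⟨p, hp⟩ := hwf.exists_maximal hirr.1
  exact ⟨p, (hirr.directedOn_of_wellFoundedOn_gt hS hwf).maximal_iff_isGreatest.1 hp⟩

theorem scottClosed_Iic [Preorder α] (x : α) : ScottClosed (Set.Iic x) :=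
  ⟨isLowerSet_Iic x, fun _ hd _ _ _ ha => ha.2 hd⟩

theorem scottIrred_Iic [Preorder α] (x : α) : ScottIrred (Set.Iic x) :=
  ⟨⟨x, le_rfl⟩, fun _ _ hB hC hcover =>
    (hcover (Set.mem_Iic.2 le_rfl)).imp (hB.1.Iic_subset ·) (hC.1.Iic_subset ·)⟩

/-- The principal ideal `↓x`, as a point of the order sobrification. -/
def OrderSob.principal [Preorder α] (x : α) : OrderSob α :=
  ⟨Set.Iic x, scottClosed_Iic x, scottIrred_Iic x⟩

theorem isLowerSet_nabla [Preorder α] (A : OrderSob α) : IsLowerSet (Nabla A) := by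
  rintro E F hFE ⟨x, hxA, hEx⟩
  exact ⟨x, hxA, Set.Subset.trans hFE hEx⟩

theorem dominated_of_exists_isGreatest [Preorder α] (hα : IsDcpo α)
    (hgreatest : ∀ E : OrderSob α, BddAbove (E : Set α) → ∃ p, IsGreatest (E : Set α) p) :
    Dominated α := by
  refine fun A => ⟨isLowerSet_nabla A, fun D hDA hne hD L hL => ?_⟩
  have hDgreatest : ∀ E ∈ D, ∃ p, IsGreatest (E : Set α) p := fun E hE =>
    have ⟨x, _, hEx⟩ := hDA hE
    hgreatest E ⟨x, hEx⟩
  let d : Set α := {p | ∃ E ∈ D, IsGreatest (E : Set α) p}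
  have hdA : d ⊆ (A : Set α) := by
    rintro p ⟨E, hE, hp⟩
    obtain ⟨x, hxA, hEx⟩ := hDA hE
    exact A.2.1.1 (hEx hp.1) hxA
  have hdne : d.Nonempty := by
    obtain ⟨E, hE⟩ := hne
    obtain ⟨p, hp⟩ := hDgreatest E hE
    exact ⟨p, E, hE, hp⟩
  have hd : DirectedOn (· ≤ ·) d := by
    rintro p ⟨E, hE, hp⟩ q ⟨F, hF, hq⟩
    obtain ⟨G, hG, hEG, hFG⟩ := hD E hE F hF
    obtain ⟨r, hr⟩ := hDgreatest G hG
    exact ⟨r, ⟨G, hG, hr⟩, hr.2 (hEG hp.1), hr.2 (hFG hq.1)⟩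
  obtain ⟨x, hx⟩ := hα d hdne hd
  have hL_le : L ≤ OrderSob.principal x := hL.2 fun E hE y hy =>
    have ⟨p, hp⟩ := hDgreatest E hE
    (hp.2 hy).trans (hx.1 ⟨E, hE, hp⟩)
  exact ⟨x, A.2.1.2 d hdA hdne hd x hx, hL_le⟩

namespace JS

theorem le_def {p q : JS} :
    p ≤ q ↔ (p.1 = q.1 ∧ p.2 ≤ q.2) ∨ (q.2 = ⊤ ∧ p.2 ≠ ⊤ ∧ p.2 ≤ (q.1 : ℕ∞)) :=
  Iff.rfl

theorem le_of_fst_eq {p q : JS} (hfst : p.1 = q.1) (hsnd : p.2 ≤ q.2) : p ≤ q :=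
  .inl ⟨hfst, hsnd⟩

theorem le_iff_of_snd_ne_top {p q : JS} (hq : q.2 ≠ ⊤) : p ≤ q ↔ p.1 = q.1 ∧ p.2 ≤ q.2 := by
  simp only [le_def, hq, false_and, or_false]

theorem fst_eq_of_le_of_lt_snd {p q : JS} (hle : p ≤ q) (hlt : (q.1 : ℕ∞) < p.2) : p.1 = q.1 :=
  (le_def.1 hle).elim And.left fun h => absurd h.2.2 hlt.not_ge

theorem snd_strictMono : StrictMono fun p : JS => p.2 := by
  intro p q hlt
  rcases le_def.1 hlt.le with ⟨hfst, hsnd⟩ | ⟨hq, hp, -⟩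
  · exact hsnd.lt_of_ne fun heq => hlt.ne (Prod.ext hfst heq)
  · exact lt_of_lt_of_eq (lt_top_iff_ne_top.2 hp) hq.symm

theorem isMax_of_snd_eq_top {p : JS} (hp : p.2 = ⊤) : IsMax p :=
  snd_strictMono.isMax_of_apply (isMax_iff_eq_top.2 hp)

theorem wellFoundedOn_gt_of_snd_le {S : Set JS} {N : ℕ} (hN : ∀ p ∈ S, p.2 ≤ (N : ℕ∞)) :
    S.WellFoundedOn (· > ·) := by
  let height : JS → ℕ∞ := fun p => p.2
  have hsup : sSup (height '' S) < ⊤ :=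
    (sSup_le (Set.forall_mem_image.2 hN)).trans_lt (ENat.natCast_lt_top N)
  have hheights : (height '' S).WellFoundedOn (· > ·) :=
    (ENat.finite_of_sSup_lt_top hsup).wellFoundedOn
  exact (Set.wellFoundedOn_image.1 hheights).mono' fun _ _ _ _ hlt => snd_strictMono hlt

/-- The point `(a, ∞)` at the top of column `a`; these are the maximal points of `𝕊`. -/
def columnTop (a : ℕ) : JS := (a, ⊤)

theorem isLUB_columnTop {d : Set JS} {a : ℕ} (hcol : ∀ p ∈ d, p.1 = a)
    (hunbdd : ∀ N : ℕ, ∃ p ∈ d, (N : ℕ∞) < p.2) : IsLUB d (columnTop a) := by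
  refine ⟨fun p hp => le_of_fst_eq (hcol p hp) le_top, fun q hq => ?_⟩
  have hfst : a = q.1 := by
    obtain ⟨p, hp, hlt⟩ := hunbdd q.1
    exact (hcol p hp).symm.trans (fst_eq_of_le_of_lt_snd (hq hp) hlt)
  have hsnd : q.2 = ⊤ := ENat.eq_top_iff_forall_gt.2 fun N =>
    have ⟨p, hp, hlt⟩ := hunbdd N
    hlt.trans_le (snd_strictMono.monotone (hq hp))
  exact le_of_fst_eq hfst hsnd.ge

theorem directedOn_of_fst_eq {d : Set JS} {a : ℕ} (hcol : ∀ p ∈ d, p.1 = a) :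
    DirectedOn (· ≤ ·) d := by
  have hchain : IsChain (· ≤ ·) d := fun p hp q hq _ =>
    have hfst : p.1 = q.1 := (hcol p hp).trans (hcol q hq).symm
    (le_total p.2 q.2).imp (le_of_fst_eq hfst) (le_of_fst_eq hfst.symm)
  exact hchain.directedOn

theorem columnTop_mem {S : Set JS} (hS : ScottClosed S) {a : ℕ}
    (hunbdd : ∀ N : ℕ, ∃ p ∈ S, p.1 = a ∧ (N : ℕ∞) < p.2) : columnTop a ∈ S := by
  let d : Set JS := {p ∈ S | p.1 = a}
  have hcol : ∀ p ∈ d, p.1 = a := fun _ hp => hp.2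
  have hunbdd_d : ∀ N : ℕ, ∃ p ∈ d, (N : ℕ∞) < p.2 := fun N =>
    have ⟨p, hp, hpa, hlt⟩ := hunbdd N
    ⟨p, ⟨hp, hpa⟩, hlt⟩
  have hne : d.Nonempty := (hunbdd_d 0).imp fun _ => And.left
  exact hS.2 d (Set.sep_subset _ _) hne (directedOn_of_fst_eq hcol) _
    (isLUB_columnTop hcol hunbdd_d)

theorem isDcpo : IsDcpo JS := by
  intro d hne hd
  by_cases hbdd : ∃ N : ℕ, ∀ p ∈ d, p.2 ≤ (N : ℕ∞)
  · obtain ⟨N, hN⟩ := hbdd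
    obtain ⟨p, hp⟩ := (wellFoundedOn_gt_of_snd_le hN).exists_maximal hne
    exact ⟨p, (hd.maximal_iff_isGreatest.1 hp).isLUB⟩
  by_cases htop : ∃ p ∈ d, p.2 = ⊤
  · obtain ⟨p, hp, hp_top⟩ := htop
    have hp_max : Maximal (· ∈ d) p := ⟨hp, fun _ _ hle => isMax_of_snd_eq_top hp_top hle⟩
    exact ⟨p, (hd.maximal_iff_isGreatest.1 hp_max).isLUB⟩
  push Not at hbdd htop
  obtain ⟨s, hs⟩ := hne
  have hcol : ∀ p ∈ d, p.1 = s.1 := fun p hp => by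
    obtain ⟨r, hr, hpr, hsr⟩ := hd p hp s hs
    rw [le_iff_of_snd_ne_top (htop r hr)] at hpr hsr
    exact hpr.1.trans hsr.1.symm
  exact ⟨columnTop s.1, isLUB_columnTop hcol hbdd⟩

theorem exists_snd_le_of_notMem {S : Set JS} (hS : ScottClosed S) {x : JS}
    (hx : x ∈ upperBounds S) (hxS : x ∉ S) : ∃ N : ℕ, ∀ p ∈ S, p.2 ≤ (N : ℕ∞) := by
  by_cases hx_top : x.2 = ⊤
  · by_contra! hunbdd
    have hx_eq : x = columnTop x.1 := Prod.ext rfl hx_top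
    refine hxS (hx_eq ▸ columnTop_mem hS fun N => ?_)
    obtain ⟨p, hp, hlt⟩ := hunbdd (max N x.1)
    have hlt_N : (N : ℕ∞) < p.2 := (Nat.cast_le.2 (le_max_left N x.1)).trans_lt hlt
    have hlt_fst : (x.1 : ℕ∞) < p.2 := (Nat.cast_le.2 (le_max_right N x.1)).trans_lt hlt
    exact ⟨p, hp, fst_eq_of_le_of_lt_snd (hx hp) hlt_fst, hlt_N⟩
  · obtain ⟨N, hN⟩ := ENat.ne_top_iff_exists.1 hx_top
    exact ⟨N, fun p hp => hN ▸ snd_strictMono.monotone (hx hp)⟩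

theorem exists_isGreatest_of_bddAbove {S : Set JS} (hS : ScottClosed S) (hirr : ScottIrred S)
    (hbdd : BddAbove S) : ∃ p, IsGreatest S p := by
  obtain ⟨x, hx⟩ := hbdd
  by_cases hxS : x ∈ S
  · exact ⟨x, hxS, hx⟩
  · obtain ⟨N, hN⟩ := exists_snd_le_of_notMem hS hx hxS
    exact hirr.exists_isGreatest_of_wellFoundedOn_gt hS.1 (wellFoundedOn_gt_of_snd_le hN)

end JS

/-- Johnstone's dcpo 𝕊 is dominated: for every closed irreducible A ⊆ 𝕊,
the collection ∇A = {A' ∈ 𝕊̂ : A' ◁ A} is Scott-closed in 𝕊̂. -/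
theorem johnstone_dominated : ∀ A : OrderSob JS, ScottClosed (Nabla A) :=
  dominated_of_exists_isGreatest JS.isDcpo fun E =>
    JS.exists_isGreatest_of_bddAbove E.2.1 E.2.2

end HoZhao
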